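/- For every integer n ≥ 2, one has ((1/e)·n/ln n)^n ≤ B_n ≤ ((3/4)·n/ln n)^n. -/

import Mathlib

/-- Principal branch of the Lambert W function on `[0, ∞)`: for `x ≥ 0`,
`lambertW x` is the unique `y ≥ 0` with `y * exp y = x`. -/
noncomputable def lambertW (x : ℝ) : ℝ := Function.invFun (fun y : ℝ => y * Real.exp y) x

/-- Bell numbers: `Bell 0 = 1` and `Bell (n+1) = ∑_{k=0}^{n} C(n,k) * Bell k`. -/
def Bell : ℕ → ℕ
  | 0 => 1
  | n + 1 => ∑ k ∈ (Finset.range (n + 1)).attach, (n.choose k.1) * Bell k.1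
decreasing_by exact Finset.mem_range.mp k.2

/-!
Dobiński's formula `e * B_n = ∑ k ^ n / k!` drives both bounds.

For the lower bound, keeping only the terms with index at least `k` gives `k ^ (n - k) ≤ B_n`, and
`k = ⌈n / log n⌉` is good enough as soon as `n ≥ 5`.

For the upper bound, `k ^ n ≤ (n / (e * r)) ^ n * exp (r * k)` turns Dobiński's series into an
exponential series, so that `B_n ≤ (n / (e * r)) ^ n * exp (exp r - 1)` for every `r > 0`. The
choice `r = (3 / 4) * log n` settles all `n ≥ 40`; the remaining cases are a finite computation with
rational upper bounds for `log n`.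
-/

theorem bell_succ (n : ℕ) :
    Bell (n + 1) = ∑ k ∈ Finset.range (n + 1), n.choose k * Bell k := by
  rw [Bell, Finset.sum_attach (Finset.range (n + 1)) fun k => n.choose k * Bell k]

section Dobinski

theorem hasSum_pow_div_factorial_exp (x : ℝ) :
    HasSum (fun k : ℕ => x ^ k / k.factorial) (Real.exp x) := by
  rw [Real.exp_eq_exp_ℝ]
  exact NormedSpace.expSeries_div_hasSum_exp x

theorem succ_pow_succ_div_factorial_succ (n k : ℕ) :
    ((k + 1 : ℕ) : ℝ) ^ (n + 1) / (k + 1).factorial =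
      ∑ j ∈ Finset.range (n + 1), (n.choose j : ℝ) * ((k : ℝ) ^ j / k.factorial) := by
  calc ((k + 1 : ℕ) : ℝ) ^ (n + 1) / (k + 1).factorial
      = ((k : ℝ) + 1) ^ n / k.factorial := by
        rw [Nat.factorial_succ]
        push_cast
        field_simp
        ring
    _ = ∑ j ∈ Finset.range (n + 1), (n.choose j : ℝ) * ((k : ℝ) ^ j / k.factorial) := by
        rw [add_pow, Finset.sum_div]
        refine Finset.sum_congr rfl fun j _ => ?_
        rw [one_pow]
        ring

theorem hasSum_pow_div_factorial_bell (n : ℕ) :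
    HasSum (fun k : ℕ => (k : ℝ) ^ n / k.factorial) (Real.exp 1 * Bell n) := by
  induction n using Nat.strong_induction_on with
  | _ n ih =>
    cases n with
    | zero => simpa [Bell] using hasSum_pow_div_factorial_exp 1
    | succ n =>
      have hshift : HasSum (fun k : ℕ => ((k + 1 : ℕ) : ℝ) ^ (n + 1) / (k + 1).factorial)
          (∑ j ∈ Finset.range (n + 1), (n.choose j : ℝ) * (Real.exp 1 * Bell j)) := by
        simp only [succ_pow_succ_div_factorial_succ]
        exact hasSum_sum fun j hj => (ih j (Finset.mem_range.mp hj)).mul_left _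
      have hvalue : ∑ j ∈ Finset.range (n + 1), (n.choose j : ℝ) * (Real.exp 1 * Bell j) =
          Real.exp 1 * Bell (n + 1) := by
        rw [bell_succ]
        push_cast
        rw [Finset.mul_sum]
        exact Finset.sum_congr rfl fun j _ => by ring
      rw [hvalue] at hshift
      exact (hasSum_nat_add_iff' 1).mp (by simpa using hshift)

end Dobinski

section LowerBound

theorem factorial_add_le_factorial_mul_pow (j k : ℕ) :
    (j + k).factorial ≤ j.factorial * (j + k) ^ k := by
  calc (j + k).factorial = j.factorial * (j + k).descFactorial k := by
        rw [← Nat.factorial_mul_descFactorial (Nat.le_add_left k j), Nat.add_sub_cancel]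
    _ ≤ j.factorial * (j + k) ^ k := by gcongr; exact Nat.descFactorial_le_pow _ _

theorem pow_le_bell_add (k m : ℕ) : (k : ℝ) ^ m ≤ Bell (m + k) := by
  have hterm (j : ℕ) : (k : ℝ) ^ m * (1 ^ j / j.factorial) ≤
      ((j + k : ℕ) : ℝ) ^ (m + k) / (j + k).factorial := by
    have hfactorial : ((j + k).factorial : ℝ) ≤ j.factorial * ((j + k : ℕ) : ℝ) ^ k := by
      exact_mod_cast factorial_add_le_factorial_mul_pow j k
    rw [one_pow, mul_one_div, div_le_div_iff₀ (by positivity) (by positivity)]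
    calc (k : ℝ) ^ m * (j + k).factorial
        ≤ ((j + k : ℕ) : ℝ) ^ m * (j.factorial * ((j + k : ℕ) : ℝ) ^ k) := by
          gcongr
          exact Nat.le_add_left k j
      _ = ((j + k : ℕ) : ℝ) ^ (m + k) * j.factorial := by ring
  have htail := (hasSum_nat_add_iff' k).mpr (hasSum_pow_div_factorial_bell (m + k))
  have hle := hasSum_le hterm ((hasSum_pow_div_factorial_exp 1).mul_left _) htail
  have hhead : 0 ≤ ∑ i ∈ Finset.range k, (i : ℝ) ^ (m + k) / i.factorial := by positivity
  refine le_of_mul_le_mul_left ?_ (Real.exp_pos 1)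
  linarith

theorem two_mul_sub_one_div_add_one_le_log {x : ℝ} (hx : 1 ≤ x) :
    2 * (x - 1) / (x + 1) ≤ Real.log x := by
  have h := Real.le_log_one_add_of_nonneg (sub_nonneg.mpr hx)
  rwa [show x - 1 + 2 = x + 1 by ring, add_sub_cancel] at h

theorem sq_le_exp_add_self_mul_log {x : ℝ} (hx : 3 / 2 ≤ x) :
    x ^ 2 ≤ (Real.exp x + x) * Real.log x := by
  have hexp : 1 + x + x ^ 2 / 2 + x ^ 3 / 6 ≤ Real.exp x := by
    simpa [Finset.sum_range_succ, Nat.factorial] using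
      Real.sum_le_exp_of_nonneg (show 0 ≤ x by linarith) 4
  have hpoly : x ^ 2 * (x + 1) ≤ (1 + x + x ^ 2 / 2 + x ^ 3 / 6 + x) * (2 * (x - 1)) := by
    have hcube : (3 / 2) ^ 3 ≤ x ^ 3 := by gcongr
    nlinarith
  calc x ^ 2 ≤ (1 + x + x ^ 2 / 2 + x ^ 3 / 6 + x) * (2 * (x - 1) / (x + 1)) := by
        rwa [← mul_div_assoc, le_div_iff₀ (by linarith)]
    _ ≤ (Real.exp x + x) * Real.log x := by
        gcongr
        · exact div_nonneg (by linarith) (by linarith)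
        · exact two_mul_sub_one_div_add_one_le_log (by linarith)

theorem exp_mul_sub_log_sub_one_le {x k : ℝ} (hx : 3 / 2 ≤ x) (hk_ge : Real.exp x / x ≤ k)
    (hk_le : k ≤ Real.exp x / x + 1) (hk_exp : k ≤ Real.exp x) :
    Real.exp x * (x - Real.log x - 1) ≤ (Real.exp x - k) * Real.log k := by
  have hx0 : 0 < x := by linarith
  have hlog_nonneg : 0 ≤ x - Real.log x := by linarith [Real.log_le_sub_one_of_pos hx0]
  have hlog_k : x - Real.log x ≤ Real.log k := by
    calc x - Real.log x = Real.log (Real.exp x / x) := by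
          rw [Real.log_div (Real.exp_ne_zero x) hx0.ne', Real.log_exp]
      _ ≤ Real.log k := Real.log_le_log (by positivity) hk_ge
  have hmain : x ≤ (Real.exp x / x + 1) * Real.log x := by
    refine le_of_mul_le_mul_right ?_ hx0
    calc x * x = x ^ 2 := by ring
      _ ≤ (Real.exp x + x) * Real.log x := sq_le_exp_add_self_mul_log hx
      _ = (Real.exp x / x + 1) * Real.log x * x := by field_simp
  calc Real.exp x * (x - Real.log x - 1)
      ≤ Real.exp x * (x - Real.log x - 1) + ((Real.exp x / x + 1) * Real.log x - x) := by linarith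
    _ = (Real.exp x - (Real.exp x / x + 1)) * (x - Real.log x) := by field_simp; ring
    _ ≤ (Real.exp x - k) * (x - Real.log x) := by gcongr
    _ ≤ (Real.exp x - k) * Real.log k :=
        mul_le_mul_of_nonneg_left hlog_k (sub_nonneg.mpr hk_exp)

theorem three_halves_le_log {x : ℝ} (hx : 5 ≤ x) : 3 / 2 ≤ Real.log x := by
  rw [Real.le_log_iff_exp_le (by linarith)]
  refine le_trans (le_of_pow_le_pow_left₀ two_ne_zero (by norm_num) ?_) hx
  calc Real.exp (3 / 2) ^ 2 = Real.exp 1 ^ 3 := by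
        rw [← Real.exp_nat_mul, ← Real.exp_nat_mul]; norm_num
    _ ≤ 2.72 ^ 3 := by gcongr; linarith [Real.exp_one_lt_d9]
    _ ≤ 5 ^ 2 := by norm_num

theorem pow_le_bell_of_five_le {n : ℕ} (hn : 5 ≤ n) :
    (1 / Real.exp 1 * n / Real.log n) ^ n ≤ (Bell n : ℝ) := by
  have hn5 : (5 : ℝ) ≤ n := by exact_mod_cast hn
  have hn0 : (0 : ℝ) < n := by linarith
  have hlog : 3 / 2 ≤ Real.log n := three_halves_le_log hn5
  have hdiv : 0 < (n : ℝ) / Real.log n := by positivity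
  set k := ⌈(n : ℝ) / Real.log n⌉₊
  have hk_ge : (n : ℝ) / Real.log n ≤ k := Nat.le_ceil _
  have hk0 : (0 : ℝ) < k := hdiv.trans_le hk_ge
  have hkn : k ≤ n := Nat.ceil_le.mpr (div_le_self hn0.le (by linarith))
  have hlog_base : Real.log (1 / Real.exp 1 * n / Real.log n) =
      Real.log n - Real.log (Real.log n) - 1 := by
    rw [Real.log_div (by positivity) (by positivity), Real.log_mul (by positivity) (by positivity),
      Real.log_div (by positivity) (by positivity), Real.log_exp, Real.log_one]
    ring
  have hkey := exp_mul_sub_log_sub_one_le (k := k) hlog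
  rw [Real.exp_log hn0] at hkey
  have hpow : (1 / Real.exp 1 * n / Real.log n) ^ n ≤ (k : ℝ) ^ (n - k) := by
    rw [← Real.log_le_log_iff (by positivity) (pow_pos hk0 _), Real.log_pow, Real.log_pow,
      Nat.cast_sub hkn, hlog_base]
    exact hkey hk_ge (Nat.ceil_lt_add_one hdiv.le).le (by exact_mod_cast hkn)
  calc (1 / Real.exp 1 * n / Real.log n) ^ n ≤ (k : ℝ) ^ (n - k) := hpow
    _ ≤ Bell (n - k + k) := pow_le_bell_add k (n - k)
    _ = Bell n := by rw [Nat.sub_add_cancel hkn]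

theorem pow_le_bell_of_le_four {n : ℕ} (hn : 2 ≤ n) (hn4 : n ≤ 4) :
    (1 / Real.exp 1 * n / Real.log n) ^ n ≤ (Bell n : ℝ) := by
  have hn2 : (2 : ℝ) ≤ n := by exact_mod_cast hn
  have hlog_pos : 0 < Real.log n := Real.log_pos (by linarith)
  have hlog : 2 * ((n : ℝ) - 1) / (n + 1) ≤ Real.log n :=
    two_mul_sub_one_div_add_one_le_log (by linarith)
  have hbase : 1 / Real.exp 1 * n / Real.log n ≤ 5 / 4 := by
    have hrat : 4 / 5 * (n : ℝ) ≤ 2.71 * (2 * ((n : ℝ) - 1) / (n + 1)) := by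
      interval_cases n <;> norm_num
    rw [one_div_mul_eq_div, div_div, div_le_iff₀ (by positivity)]
    have hprod : 2.71 * (2 * ((n : ℝ) - 1) / (n + 1)) ≤ Real.exp 1 * Real.log n := by
      gcongr
      · exact div_nonneg (by linarith) (by linarith)
      · linarith [Real.exp_one_gt_d9]
    linarith
  have hbell : (5 / 4 : ℝ) ^ n ≤ Bell n := by
    interval_cases n <;> norm_num [bell_succ, Finset.sum_range_succ, Bell, Nat.choose]
  exact (pow_le_pow_left₀ (by positivity) hbase n).trans hbell

end LowerBound

section UpperBound

theorem pow_le_div_exp_one_pow_mul_exp (n : ℕ) {x : ℝ} (hx : 0 ≤ x) :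
    x ^ n ≤ (n / Real.exp 1) ^ n * Real.exp x := by
  rcases n.eq_zero_or_pos with rfl | hn
  · simpa using hx
  have hn0 : (0 : ℝ) < n := by exact_mod_cast hn
  have hbase : x ≤ n / Real.exp 1 * Real.exp (x / n) := by
    calc x = n * (x / n - 1 + 1) := by field_simp; ring
      _ ≤ n * Real.exp (x / n - 1) := by gcongr; exact Real.add_one_le_exp _
      _ = n / Real.exp 1 * Real.exp (x / n) := by rw [Real.exp_sub]; ring
  calc x ^ n ≤ (n / Real.exp 1 * Real.exp (x / n)) ^ n := by gcongr
    _ = (n / Real.exp 1) ^ n * Real.exp x := by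
        rw [mul_pow, ← Real.exp_nat_mul, mul_div_cancel₀ _ hn0.ne']

theorem bell_le_pow_mul_exp_exp_sub_one (n : ℕ) {r : ℝ} (hr : 0 < r) :
    (Bell n : ℝ) ≤ (n / (Real.exp 1 * r)) ^ n * Real.exp (Real.exp r - 1) := by
  have hterm (k : ℕ) : (k : ℝ) ^ n / k.factorial ≤
      (n / (Real.exp 1 * r)) ^ n * (Real.exp r ^ k / k.factorial) := by
    rw [← mul_div_assoc]
    gcongr
    calc (k : ℝ) ^ n = (k * r) ^ n / r ^ n := by rw [mul_pow]; field_simp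
      _ ≤ (n / Real.exp 1) ^ n * Real.exp (k * r) / r ^ n := by
          gcongr
          exact pow_le_div_exp_one_pow_mul_exp n (by positivity)
      _ = (n / (Real.exp 1 * r)) ^ n * Real.exp r ^ k := by
          rw [Real.exp_nat_mul, ← div_div, div_pow (n / Real.exp 1) r]
          ring
  have hsum := hasSum_le hterm (hasSum_pow_div_factorial_bell n)
    ((hasSum_pow_div_factorial_exp (Real.exp r)).mul_left _)
  rwa [Real.exp_sub, ← mul_div_assoc, le_div_iff₀' (Real.exp_pos 1)]

theorem exp_exp_neg_log_div_four_le {x : ℝ} (hx : 40 ≤ x) :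
    Real.exp (Real.exp (-(Real.log x / 4))) ≤ 3 / 2 := by
  have hinner : Real.exp (-(Real.log x / 4)) ≤ 2 / 5 := by
    rw [Real.exp_neg]
    refine inv_le_of_inv_le₀ (by norm_num) (le_of_pow_le_pow_left₀ four_ne_zero (by positivity) ?_)
    calc ((2 / 5 : ℝ)⁻¹) ^ 4 ≤ 40 := by norm_num
      _ ≤ x := hx
      _ = Real.exp (Real.log x / 4) ^ 4 := by
          rw [← Real.exp_nat_mul, Nat.cast_ofNat, mul_div_cancel₀ _ four_ne_zero,
            Real.exp_log (by linarith)]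
  refine (Real.exp_le_exp.mpr hinner).trans
    (le_of_pow_le_pow_left₀ (by norm_num : 5 ≠ 0) (by norm_num) ?_)
  calc Real.exp (2 / 5) ^ 5 = Real.exp 1 ^ 2 := by
        rw [← Real.exp_nat_mul, ← Real.exp_nat_mul]; norm_num
    _ ≤ 2.72 ^ 2 := by gcongr; linarith [Real.exp_one_lt_d9]
    _ ≤ (3 / 2) ^ 5 := by norm_num

theorem bell_le_pow_of_forty_le {n : ℕ} (hn : 40 ≤ n) :
    (Bell n : ℝ) ≤ (3 / 4 * n / Real.log n) ^ n := by
  have hn40 : (40 : ℝ) ≤ n := by exact_mod_cast hn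
  have hlog : 0 < Real.log n := Real.log_pos (by linarith)
  have hexp : Real.exp (3 / 4 * Real.log n) = n * Real.exp (-(Real.log n / 4)) := by
    rw [← Real.exp_log (show (0 : ℝ) < n by linarith), ← Real.exp_add, Real.log_exp]
    ring_nf
  calc (Bell n : ℝ)
      ≤ (n / (Real.exp 1 * (3 / 4 * Real.log n))) ^ n *
          Real.exp (Real.exp (3 / 4 * Real.log n) - 1) :=
        bell_le_pow_mul_exp_exp_sub_one n (by positivity)
    _ ≤ (n / (Real.exp 1 * (3 / 4 * Real.log n))) ^ n *
          Real.exp (Real.exp (3 / 4 * Real.log n)) := by gcongr; linarith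
    _ = (n / (Real.exp 1 * (3 / 4 * Real.log n)) *
          Real.exp (Real.exp (-(Real.log n / 4)))) ^ n := by
        rw [hexp, Real.exp_nat_mul, mul_pow]
    _ ≤ (n / (2.7 * (3 / 4 * Real.log n)) * (3 / 2)) ^ n := by
        gcongr
        · linarith [Real.exp_one_gt_d9]
        · exact exp_exp_neg_log_div_four_le hn40
    _ = (20 / 27 * n / Real.log n) ^ n := by congr 1; field_simp; norm_num
    _ ≤ (3 / 4 * n / Real.log n) ^ n := by gcongr (?_ * _ / _) ^ _; norm_num

end UpperBound

section SmallCases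

/-- The list `[Bell 0, …, Bell n]`, computed by structural recursion so that the kernel can
evaluate it; the well-founded recursion defining `Bell` does not reduce well. -/
def bellTable : ℕ → List ℕ
  | 0 => [1]
  | n + 1 => bellTable n ++
      [(List.zipWith (· * ·) ((List.range (n + 1)).map n.choose) (bellTable n)).sum]

theorem bellTable_eq_map_bell (n : ℕ) : bellTable n = (List.range (n + 1)).map Bell := by
  induction n with
  | zero => simp [bellTable, Bell]
  | succ n ih =>
    rw [bellTable, ih, List.range_succ (n := n + 1), List.map_append, List.map_singleton,
      bell_succ, List.zipWith_map, List.zipWith_self]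
    rfl

theorem log_le_div_of_pow_le_exp_one_pow {x : ℝ} {a b : ℕ} (hx : 0 < x) (hb : 0 < b)
    (h : x ^ b ≤ Real.exp 1 ^ a) : Real.log x ≤ a / b := by
  have hb0 : (0 : ℝ) < b := by exact_mod_cast hb
  rw [le_div_iff₀' hb0, ← Real.log_pow, Real.log_le_iff_le_exp (by positivity)]
  simpa only [← Real.exp_nat_mul, mul_one] using h

-- The certificate `n ^ 25 ≤ 2.718 ^ a` gives `log n ≤ a / 25`, and the second inequality says
-- `Bell n * (a / 25) ^ n ≤ (3 / 4 * n) ^ n`.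
theorem exists_log_certificate_bellTable :
    ∀ n < 40, 2 ≤ n → ∃ a < 100, n ^ 25 * 1000 ^ a ≤ 2718 ^ a ∧
      (bellTable 39).getD n 0 * (4 * a) ^ n ≤ (75 * n) ^ n := by
  decide +kernel

theorem bell_le_pow_of_lt_forty {n : ℕ} (hn : 2 ≤ n) (hn40 : n < 40) :
    (Bell n : ℝ) ≤ (3 / 4 * n / Real.log n) ^ n := by
  obtain ⟨a, -, hpow, hbell⟩ := exists_log_certificate_bellTable n hn40 hn
  have hn2 : (2 : ℝ) ≤ n := by exact_mod_cast hn
  have hlog_pos : 0 < Real.log n := Real.log_pos (by linarith)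
  have hlog : Real.log n ≤ a / (25 : ℕ) := by
    refine log_le_div_of_pow_le_exp_one_pow (by linarith) (by norm_num) ?_
    calc (n : ℝ) ^ 25 ≤ (2718 / 1000) ^ a := by
          rw [div_pow, le_div_iff₀ (by positivity)]
          exact_mod_cast hpow
      _ ≤ Real.exp 1 ^ a := by gcongr; linarith [Real.exp_one_gt_d9]
  have hbell' : (Bell n : ℝ) * (4 * a) ^ n ≤ (75 * n) ^ n := by
    have hget : (bellTable 39).getD n 0 = Bell n := by
      simp [bellTable_eq_map_bell, List.getD, hn40]
    rw [hget] at hbell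
    exact_mod_cast hbell
  rw [div_pow, le_div_iff₀ (by positivity)]
  calc (Bell n : ℝ) * Real.log n ^ n ≤ Bell n * (a / (25 : ℕ)) ^ n := by gcongr
    _ = Bell n * (4 * a) ^ n / 100 ^ n := by
        rw [mul_div_assoc, ← div_pow]; congr 2; push_cast; ring
    _ ≤ (75 * n) ^ n / 100 ^ n := by gcongr
    _ = (3 / 4 * n) ^ n := by rw [← div_pow]; congr 1; ring

end SmallCases

theorem stmt_7 (n : ℕ) (hn : 2 ≤ n) :
    ((1 / Real.exp 1) * (n : ℝ) / Real.log n) ^ n ≤ (Bell n : ℝ) ∧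
      (Bell n : ℝ) ≤ ((3 / 4 : ℝ) * (n : ℝ) / Real.log n) ^ n := by
  constructor
  · rcases le_or_gt n 4 with hn4 | hn5
    · exact pow_le_bell_of_le_four hn hn4
    · exact pow_le_bell_of_five_le hn5
  · rcases lt_or_ge n 40 with hn40 | hn40
    · exact bell_le_pow_of_lt_forty hn hn40
    · exact bell_le_pow_of_forty_le hn40
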